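/- Let Γ be a finite group acting on a finite set X, and let M be the abelian group of functions X → ℂ^× under pointwise multiplication, with Γ-action (σ·t)(x) = t(σ^{-1}·x). Let 1 → A →^ι B →^p M → 1 be a short exact sequence of abelian groups with Γ-action and Γ-equivariant homomorphisms. Then the natural map H¹(Γ, A) → H¹(Γ, B) is injective. Concretely: if a : Γ → A satisfies the 1-cocycle relation a(στ) = a(σ)·(σ·a(τ)) for all σ, τ ∈ Γ, and there exists b ∈ B with ι(a(σ)) = (σ·b)·b^{-1} for all σ ∈ Γ, then there exists a₀ ∈ A with a(σ) = (σ·a₀)·a₀^{-1} for all σ ∈ Γ. -/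

import Mathlib

/-!
By exactness, the cocycle dies in `H¹(Γ, A)` as soon as the invariant element `P b` of `M` lifts
to an invariant element of `B`. Surjectivity of `P` gives only some lift, but the norm
`∏ σ, σ • c` of any `c` is invariant, so every invariant of `M` lifts if every invariant of `M` is
a norm, that is, if the Tate cohomology group `Ĥ⁰(Γ, M)` vanishes. For functions on a `Γ`-set this
follows from the existence of `|Γ|`-th roots of the values: an invariant function has an invariant
`|Γ|`-th root, and the norm of that root is its `|Γ|`-th power.
-/

open MulAction groupCohomology Function

section Coboundary

variable {Γ A B M : Type*} [Monoid Γ] [CommGroup A] [MulDistribMulAction Γ A]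
  [CommGroup B] [MulDistribMulAction Γ B] [Group M] [MulDistribMulAction Γ M]

theorem map_mem_fixedPoints_of_map_smul_div_eq_one (p : B →*[Γ] M) {b : B}
    (h : ∀ σ : Γ, p (σ • b / b) = 1) : p b ∈ fixedPoints Γ M := fun σ => by
  rw [← map_smul, ← div_eq_one, ← map_div, h]

theorem isMulCoboundary₁_of_surjOn_fixedPoints {ι : A →*[Γ] B} (hι : Injective ι)
    {p : B →*[Γ] M} (hexact : MulExact ι p)
    (hp : Set.SurjOn p (fixedPoints Γ B) (fixedPoints Γ M))
    {f : Γ → A} (hf : IsMulCoboundary₁ (ι ∘ f)) : IsMulCoboundary₁ f := by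
  obtain ⟨b, hb⟩ := hf
  have hpb : p b ∈ fixedPoints Γ M := map_mem_fixedPoints_of_map_smul_div_eq_one p fun σ => by
    rw [hb, comp_apply, hexact.apply_apply_eq_one]
  obtain ⟨c, hc, hpc⟩ := hp hpb
  obtain ⟨a, ha⟩ : b / c ∈ Set.range ι := (hexact _).1 (by rw [map_div, hpc, div_self'])
  refine ⟨a, fun σ => hι ?_⟩
  calc ι (σ • a / a) = (σ • b / σ • c) / (b / c) := by rw [map_div, map_smul, ha, smul_div']
    _ = σ • b / b := by rw [hc σ, div_div_div_cancel_right]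
    _ = ι (f σ) := hb σ

end Coboundary

section Norm

variable (Γ : Type*) {B M : Type*} [Group Γ] [Fintype Γ]
  [CommMonoid B] [MulDistribMulAction Γ B] [CommMonoid M] [MulDistribMulAction Γ M]

/-- The norm `∏ σ : Γ, σ • m` of an element `m` of a commutative monoid on which the finite group
`Γ` acts: the multiplicative counterpart of `Representation.norm`. -/
def groupNorm (m : M) : M := ∏ σ : Γ, σ • m

theorem groupNorm_mem_fixedPoints (m : M) : groupNorm Γ m ∈ fixedPoints Γ M :=
  Finset.smul_prod_perm m

variable {Γ}

theorem map_groupNorm (p : B →*[Γ] M) (b : B) : p (groupNorm Γ b) = groupNorm Γ (p b) := by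
  simp only [groupNorm, map_prod, map_smul]

theorem groupNorm_eq_pow_card {m : M} (hm : m ∈ fixedPoints Γ M) :
    groupNorm Γ m = m ^ Fintype.card Γ :=
  Finset.prod_eq_pow_card fun σ _ => hm σ

theorem surjOn_fixedPoints_of_subset_range_groupNorm {p : B →*[Γ] M} (hp : Surjective p)
    (hM : fixedPoints Γ M ⊆ Set.range (groupNorm Γ)) :
    Set.SurjOn p (fixedPoints Γ B) (fixedPoints Γ M) := by
  intro m hm
  obtain ⟨m', rfl⟩ := hM hm
  obtain ⟨b, rfl⟩ := hp m'
  exact ⟨groupNorm Γ b, groupNorm_mem_fixedPoints Γ b, map_groupNorm p b⟩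

end Norm

section Permutation

attribute [local instance] arrowAction arrowMulDistribMulAction

theorem comp_mem_fixedPoints_arrow {Γ X D E : Type*} [Group Γ] [MulAction Γ X] (r : D → E)
    {t : X → D} (ht : t ∈ fixedPoints Γ (X → D)) : r ∘ t ∈ fixedPoints Γ (X → E) :=
  fun σ => congrArg (r ∘ ·) (ht σ)

theorem fixedPoints_arrow_subset_range_groupNorm {Γ X D : Type*} [Group Γ] [Fintype Γ]
    [MulAction Γ X] [CommMonoid D] (hD : Surjective fun d : D => d ^ Fintype.card Γ) :
    fixedPoints Γ (X → D) ⊆ Set.range (groupNorm Γ) := by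
  intro t ht
  obtain ⟨root, hroot⟩ := hD.hasRightInverse
  refine ⟨root ∘ t, ?_⟩
  rw [groupNorm_eq_pow_card (comp_mem_fixedPoints_arrow root ht)]
  exact funext fun x => hroot (t x)

theorem h1_map_injective_of_permutation_quotient_general
    {Γ X D A B : Type*} [Group Γ] [Fintype Γ] [MulAction Γ X]
    [CommGroup D] (hD : Surjective fun d : D => d ^ Fintype.card Γ)
    [CommGroup A] [MulDistribMulAction Γ A] [CommGroup B] [MulDistribMulAction Γ B]
    (ι : A →* B) (hι_inj : Injective ι) (hι_equiv : ∀ σ : Γ, ∀ a : A, ι (σ • a) = σ • ι a)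
    (P : B →* (X → D)) (hP_surj : Surjective P)
    (hP_equiv : ∀ σ : Γ, ∀ b : B, ∀ x : X, P (σ • b) x = P b (σ⁻¹ • x))
    (hexact : MulExact ι P) (a : Γ → A) (b : B) (hb : ∀ σ : Γ, ι (a σ) = (σ • b) * b⁻¹) :
    ∃ a₀ : A, ∀ σ : Γ, a σ = (σ • a₀) * a₀⁻¹ := by
  let ι' : A →*[Γ] B := { ι with map_smul' := hι_equiv }
  let P' : B →*[Γ] (X → D) := { P with map_smul' := fun σ b => funext (hP_equiv σ b) }
  have hlift : Set.SurjOn P' (fixedPoints Γ B) (fixedPoints Γ (X → D)) :=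
    surjOn_fixedPoints_of_subset_range_groupNorm hP_surj
      (fixedPoints_arrow_subset_range_groupNorm hD)
  have hιa : IsMulCoboundary₁ (ι' ∘ a) := ⟨b, fun σ => (div_eq_mul_inv _ _).trans (hb σ).symm⟩
  obtain ⟨a₀, ha₀⟩ : IsMulCoboundary₁ a :=
    isMulCoboundary₁_of_surjOn_fixedPoints (ι := ι') hι_inj hexact hlift hιa
  exact ⟨a₀, fun σ => by rw [← ha₀, div_eq_mul_inv]⟩

end Permutation

theorem surjective_units_pow_of_isAlgClosed {K : Type*} [Field K] [IsAlgClosed K] {n : ℕ}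
    (hn : n ≠ 0) : Surjective fun u : Kˣ => u ^ n := by
  intro u
  obtain ⟨z, hz⟩ := IsAlgClosed.exists_pow_nat_eq (u : K) (Nat.pos_of_ne_zero hn)
  have hz_unit : IsUnit z := (isUnit_pow_iff hn).1 (hz ▸ u.isUnit)
  exact ⟨hz_unit.unit, Units.ext hz⟩

/-- Let `1 → A → B → M → 1` be a short exact sequence of abelian groups with `Γ`-action,
where `M = (X → ℂˣ)` with the permutation action `(σ·t)(x) = t(σ⁻¹·x)` for a finite group
`Γ` acting on a finite set `X`. Then `H¹(Γ,A) → H¹(Γ,B)` is injective: any 1-cocycle of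
`Γ` in `A` which becomes a coboundary in `B` is already a coboundary in `A`. -/
theorem h1_map_injective_of_permutation_quotient
    {Γ X A B : Type*} [Group Γ] [Fintype Γ] [Fintype X] [MulAction Γ X]
    [CommGroup A] [MulDistribMulAction Γ A]
    [CommGroup B] [MulDistribMulAction Γ B]
    (ι : A →* B) (hι_inj : Function.Injective ι)
    (hι_equiv : ∀ σ : Γ, ∀ a : A, ι (σ • a) = σ • ι a)
    (P : B →* (X → ℂˣ)) (hP_surj : Function.Surjective P)
    (hP_equiv : ∀ σ : Γ, ∀ b : B, ∀ x : X, P (σ • b) x = P b (σ⁻¹ • x))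
    (hexact : ∀ b : B, P b = 1 ↔ ∃ a : A, ι a = b)
    (a : Γ → A) (hcoc : ∀ σ τ : Γ, a (σ * τ) = a σ * σ • a τ)
    (b : B) (hb : ∀ σ : Γ, ι (a σ) = (σ • b) * b⁻¹) :
    ∃ a₀ : A, ∀ σ : Γ, a σ = (σ • a₀) * a₀⁻¹ :=
  h1_map_injective_of_permutation_quotient_general
    (surjective_units_pow_of_isAlgClosed Fintype.card_ne_zero)
    ι hι_inj hι_equiv P hP_surj hP_equiv hexact a b hb
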